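/- Let μ be the standard Gaussian measure on ℝⁿ (the Borel measure with density (2π)^{-n/2} e^{-|x|²/2} with respect to Lebesgue measure). Let f : ℝⁿ → ℝⁿ be a continuously differentiable map such that x ↦ |f(x)|² and x ↦ ‖Jf(x)‖₂² are integrable with respect to μ, where Jf(x) denotes the Jacobian matrix of f at x and ‖·‖₂ the Hilbert–Schmidt (Frobenius) norm. Then ∫_{ℝⁿ} (f(x)·x − Tr(Jf(x)))² dμ(x) ≤ ∫_{ℝⁿ} (|f(x)|² + ‖Jf(x)‖₂²) dμ(x), where Tr(Jf(x)) is the trace of the Jacobian of f at x (i.e. the divergence of f). -/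

import Mathlib

open MeasureTheory Real
open scoped RealInnerProductSpace

/-!
Write `δf(x) = f(x)·x − Tr Df(x)`. As `ρ δf = −div(ρ f)` for the Gaussian density `ρ`, a compactly
supported `f` satisfies `∫ δf dγ = 0`, and hence `∫ w δf dγ = ∫ Dw(f) dγ` for every scalar `w`.
If moreover `f` is `C²`, then `D(δf)(f) = |f|² + Tr (Df)² + δ(Df f)`, where the second derivatives
of `f` are absorbed by `δ(Df f)`. Taking `w = δf` gives the identity
`∫ (δf)² dγ = ∫ (|f|² + Tr (Df)²) dγ`, and `Tr (Df)² ≤ ‖Df‖₂²` by Cauchy–Schwarz. Mollification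
extends the inequality to compactly supported `C¹` maps and truncation to all `C¹` maps, using
Fatou's lemma on the left-hand side and dominated convergence on the right-hand side.
-/

open Filter Topology ContDiff Module
open scoped ENNReal Convolution

namespace Ramer

section HilbertSchmidt

variable {ι E F : Type*} [Fintype ι] [NormedAddCommGroup E] [InnerProductSpace ℝ E]
  [FiniteDimensional ℝ E] [NormedAddCommGroup F] [InnerProductSpace ℝ F] [FiniteDimensional ℝ F]

/-- The squared Hilbert–Schmidt norm of a linear map between Euclidean spaces, in its basis-free
form `Tr (LᵀL)`. -/
noncomputable def hilbertSchmidtSq (L : E →ₗ[ℝ] F) : ℝ :=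
  LinearMap.trace ℝ E (L.adjoint ∘ₗ L)

lemma hilbertSchmidtSq_eq_sum_norm_sq (b : OrthonormalBasis ι ℝ E) (L : E →ₗ[ℝ] F) :
    hilbertSchmidtSq L = ∑ i, ‖L (b i)‖ ^ 2 := by
  simp [hilbertSchmidtSq, LinearMap.trace_eq_sum_inner _ b, LinearMap.adjoint_inner_right]

lemma hilbertSchmidtSq_nonneg (L : E →ₗ[ℝ] F) : 0 ≤ hilbertSchmidtSq L := by
  rw [hilbertSchmidtSq_eq_sum_norm_sq (stdOrthonormalBasis ℝ E)]
  positivity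

lemma hilbertSchmidtSq_adjoint (L : E →ₗ[ℝ] F) :
    hilbertSchmidtSq L.adjoint = hilbertSchmidtSq L := by
  rw [hilbertSchmidtSq, hilbertSchmidtSq, LinearMap.adjoint_adjoint, LinearMap.trace_comp_comm']

lemma hilbertSchmidtSq_smul (c : ℝ) (L : E →ₗ[ℝ] F) :
    hilbertSchmidtSq (c • L) = c ^ 2 * hilbertSchmidtSq L := by
  simp [hilbertSchmidtSq_eq_sum_norm_sq (stdOrthonormalBasis ℝ E), norm_smul, mul_pow,
    Finset.mul_sum]

lemma hilbertSchmidtSq_add_le (L M : E →ₗ[ℝ] F) :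
    hilbertSchmidtSq (L + M) ≤ 2 * (hilbertSchmidtSq L + hilbertSchmidtSq M) := by
  simp only [hilbertSchmidtSq_eq_sum_norm_sq (stdOrthonormalBasis ℝ E),
    ← Finset.sum_add_distrib, Finset.mul_sum]
  gcongr with i
  exact (pow_le_pow_left₀ (norm_nonneg _) (norm_add_le _ _) 2).trans add_sq_le

lemma hilbertSchmidtSq_le_finrank_mul (L : E →L[ℝ] F) :
    hilbertSchmidtSq (L : E →ₗ[ℝ] F) ≤ finrank ℝ E * ‖L‖ ^ 2 := by
  have norm_image_le (i) : ‖L (stdOrthonormalBasis ℝ E i)‖ ≤ ‖L‖ := by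
    simpa using L.le_opNorm (stdOrthonormalBasis ℝ E i)
  rw [hilbertSchmidtSq_eq_sum_norm_sq (stdOrthonormalBasis ℝ E)]
  calc ∑ i, ‖L (stdOrthonormalBasis ℝ E i)‖ ^ 2 ≤ ∑ _ : Fin (finrank ℝ E), ‖L‖ ^ 2 := by
        gcongr with i
        exact norm_image_le i
    _ = finrank ℝ E * ‖L‖ ^ 2 := by simp

lemma continuous_hilbertSchmidtSq :
    Continuous fun L : E →L[ℝ] F => hilbertSchmidtSq (L : E →ₗ[ℝ] F) := by
  simp only [hilbertSchmidtSq_eq_sum_norm_sq (stdOrthonormalBasis ℝ E),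
    ContinuousLinearMap.coe_coe]
  fun_prop

lemma trace_comp_self_le_hilbertSchmidtSq (L : E →ₗ[ℝ] E) :
    LinearMap.trace ℝ E (L ∘ₗ L) ≤ hilbertSchmidtSq L := by
  let b := stdOrthonormalBasis ℝ E
  calc LinearMap.trace ℝ E (L ∘ₗ L) = ∑ i, ⟪L.adjoint (b i), L (b i)⟫ := by
        simp [LinearMap.trace_eq_sum_inner _ b, LinearMap.adjoint_inner_left]
    _ ≤ ∑ i, (‖L.adjoint (b i)‖ ^ 2 + ‖L (b i)‖ ^ 2) / 2 := by
        gcongr with i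
        nlinarith [real_inner_le_norm (L.adjoint (b i)) (L (b i)),
          two_mul_le_add_sq ‖L.adjoint (b i)‖ ‖L (b i)‖]
    _ = (hilbertSchmidtSq L.adjoint + hilbertSchmidtSq L) / 2 := by
        rw [hilbertSchmidtSq_eq_sum_norm_sq b, hilbertSchmidtSq_eq_sum_norm_sq b,
          ← Finset.sum_add_distrib, Finset.sum_div]
    _ = hilbertSchmidtSq L := by rw [hilbertSchmidtSq_adjoint, add_self_div_two]

end HilbertSchmidt

section EuclideanSpace

variable {ι κ : Type*} [Fintype ι] [Fintype κ] [DecidableEq ι]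

lemma trace_eq_sum_apply_single (L : EuclideanSpace ℝ ι →ₗ[ℝ] EuclideanSpace ℝ ι) :
    LinearMap.trace ℝ _ L = ∑ i, L (EuclideanSpace.single i 1) i := by
  simp [LinearMap.trace_eq_sum_inner L (EuclideanSpace.basisFun ι ℝ),
    EuclideanSpace.inner_single_left]

lemma hilbertSchmidtSq_eq_sum_apply_single_sq (L : EuclideanSpace ℝ ι →ₗ[ℝ] EuclideanSpace ℝ κ) :
    hilbertSchmidtSq L = ∑ i, ∑ j, L (EuclideanSpace.single j 1) i ^ 2 := by
  rw [hilbertSchmidtSq_eq_sum_norm_sq (EuclideanSpace.basisFun ι ℝ), Finset.sum_comm]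
  simp [EuclideanSpace.norm_sq_eq]

end EuclideanSpace

section Trace

variable {E : Type*} [NormedAddCommGroup E] [NormedSpace ℝ E] [FiniteDimensional ℝ E]

variable (E) in
/-- The trace as a continuous linear functional on the continuous endomorphisms of a
finite-dimensional space, so that it commutes with limits, derivatives and integrals. -/
noncomputable def traceCLM : (E →L[ℝ] E) →L[ℝ] ℝ :=
  LinearMap.toContinuousLinearMap (LinearMap.trace ℝ E ∘ₗ ContinuousLinearMap.coeLM ℝ)

lemma traceCLM_apply (L : E →L[ℝ] E) : traceCLM E L = LinearMap.trace ℝ E (L : E →ₗ[ℝ] E) := rfl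

lemma traceCLM_smulRight (φ : E →L[ℝ] ℝ) (v : E) : traceCLM E (φ.smulRight v) = φ v :=
  LinearMap.trace_smulRight (φ : E →ₗ[ℝ] ℝ) v

end Trace

section DivergenceTheorem

variable {E G : Type*} [NormedAddCommGroup E] [NormedSpace ℝ E] [FiniteDimensional ℝ E]
  [MeasurableSpace E] [BorelSpace E] [NormedAddCommGroup G] [NormedSpace ℝ G]
  {μ : Measure E} [μ.IsAddHaarMeasure]

lemma integral_fderiv_eq_zero {f : E → G} (hf : ContDiff ℝ 1 f) (hc : HasCompactSupport f) :
    ∫ x, fderiv ℝ f x ∂μ = 0 := by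
  have integrable_fderiv : Integrable (fderiv ℝ f) μ :=
    (hf.continuous_fderiv one_ne_zero).integrable_of_hasCompactSupport (hc.fderiv ℝ)
  ext v
  rw [ContinuousLinearMap.integral_apply integrable_fderiv]
  have parts := integral_smul_fderiv_eq_neg_fderiv_smul_of_integrable (μ := μ) (v := v) (g := f)
    (f := fun _ => (1 : ℝ)) (by simp) (by simpa using integrable_fderiv.apply_continuousLinearMap v)
    (by simpa using hf.continuous.integrable_of_hasCompactSupport hc)
    (fun _ _ => differentiableAt_const _) (fun x _ => hf.differentiable one_ne_zero x)
  simpa using parts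

lemma integral_traceCLM_fderiv_eq_zero {f : E → E} (hf : ContDiff ℝ 1 f)
    (hc : HasCompactSupport f) : ∫ x, traceCLM E (fderiv ℝ f x) ∂μ = 0 := by
  have integrable_fderiv : Integrable (fderiv ℝ f) μ :=
    (hf.continuous_fderiv one_ne_zero).integrable_of_hasCompactSupport (hc.fderiv ℝ)
  rw [(traceCLM E).integral_comp_comm integrable_fderiv, integral_fderiv_eq_zero hf hc, map_zero]

end DivergenceTheorem

section Approximation

lemma exists_seq_contDiffBump_tendsto_rOut {E : Type*} (c : E) :
    ∃ φ : ℕ → ContDiffBump c, Tendsto (fun k => (φ k).rOut) atTop (𝓝 0) :=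
  ⟨fun k => ⟨1 / ((k : ℝ) + 1) / 2, 1 / ((k : ℝ) + 1), by positivity,
    half_lt_self (by positivity)⟩, tendsto_one_div_add_atTop_nhds_zero_nat⟩

variable {E G : Type*} [NormedAddCommGroup E] [NormedSpace ℝ E] [FiniteDimensional ℝ E]
  [NormedAddCommGroup G] [NormedSpace ℝ G]

lemma norm_normed_convolution_le [CompleteSpace G] [MeasurableSpace E] [BorelSpace E]
    {μ : Measure E} [μ.IsAddHaarMeasure] (φ : ContDiffBump (0 : E)) {g : E → G}
    (hg : Continuous g) {C : ℝ} (hC : ∀ x, ‖g x‖ ≤ C) (x : E) :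
    ‖(φ.normed μ ⋆[ContinuousLinearMap.lsmul ℝ ℝ, μ] g) x‖ ≤ C := by
  rw [← dist_zero_right]
  refine dist_convolution_le ((norm_nonneg _).trans (hC 0)) φ.support_normed_eq.subset
    φ.nonneg_normed φ.integral_normed hg.aestronglyMeasurable fun y _ => ?_
  simpa only [dist_zero_right] using hC y

lemma fderiv_normed_convolution [MeasurableSpace E] [BorelSpace E] {μ : Measure E}
    [μ.IsAddHaarMeasure] (φ : ContDiffBump (0 : E)) {f : E → G} (hf : ContDiff ℝ 1 f)
    (hc : HasCompactSupport f) :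
    fderiv ℝ (φ.normed μ ⋆[ContinuousLinearMap.lsmul ℝ ℝ, μ] f) =
      φ.normed μ ⋆[ContinuousLinearMap.lsmul ℝ ℝ, μ] fderiv ℝ f :=
  funext fun x => (hc.hasFDerivAt_convolution_right (ContinuousLinearMap.lsmul ℝ ℝ)
    φ.continuous_normed.locallyIntegrable hf x).fderiv

lemma exists_smooth_approx [CompleteSpace G] {f : E → G} (hf : ContDiff ℝ 1 f)
    (hc : HasCompactSupport f) :
    ∃ (F : ℕ → E → G) (C C' : ℝ), (∀ k, ContDiff ℝ ∞ (F k)) ∧ (∀ k, HasCompactSupport (F k)) ∧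
      (∀ x, Tendsto (F · x) atTop (𝓝 (f x))) ∧
      (∀ x, Tendsto (fun k => fderiv ℝ (F k) x) atTop (𝓝 (fderiv ℝ f x))) ∧
      (∀ k x, ‖F k x‖ ≤ C) ∧ ∀ k x, ‖fderiv ℝ (F k) x‖ ≤ C' := by
  borelize E
  let μ : Measure E := Measure.addHaar
  obtain ⟨φ, hφ⟩ := exists_seq_contDiffBump_tendsto_rOut (0 : E)
  have continuous_fderiv : Continuous (fderiv ℝ f) := hf.continuous_fderiv one_ne_zero
  obtain ⟨C, hC⟩ := hf.continuous.bounded_above_of_compact_support hc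
  obtain ⟨C', hC'⟩ := continuous_fderiv.bounded_above_of_compact_support (hc.fderiv ℝ)
  refine ⟨fun k => (φ k).normed μ ⋆[ContinuousLinearMap.lsmul ℝ ℝ, μ] f, C, C', fun k => ?smooth,
    fun k => (φ k).hasCompactSupport_normed.convolution _ hc,
    ContDiffBump.convolution_tendsto_right_of_continuous hφ hf.continuous, fun x => ?tendsto_fderiv,
    fun k => norm_normed_convolution_le (φ k) hf.continuous hC, fun k => ?norm_fderiv_le⟩
  case smooth =>
    exact (φ k).hasCompactSupport_normed.contDiff_convolution_left _ (φ k).contDiff_normed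
      hf.continuous.locallyIntegrable
  case tendsto_fderiv =>
    simp only [fderiv_normed_convolution _ hf hc]
    exact ContDiffBump.convolution_tendsto_right_of_continuous hφ continuous_fderiv x
  case norm_fderiv_le =>
    rw [fderiv_normed_convolution _ hf hc]
    exact norm_normed_convolution_le (φ k) continuous_fderiv hC'

variable (E) in
lemma exists_seq_smooth_cutoff :
    ∃ (χ : ℕ → E → ℝ) (C : ℝ), (∀ k, ContDiff ℝ ∞ (χ k)) ∧ (∀ k, HasCompactSupport (χ k)) ∧
      (∀ k x, χ k x ∈ Set.Icc 0 1) ∧ (∀ x, Tendsto (χ · x) atTop (𝓝 1)) ∧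
      (∀ k x, ‖fderiv ℝ (χ k) x‖ ≤ C) ∧ ∀ x, Tendsto (fun k => fderiv ℝ (χ k) x) atTop (𝓝 0) := by
  let φ : ContDiffBump (0 : E) := ⟨1, 2, one_pos, one_lt_two⟩
  let c : ℕ → ℝ := fun k => 1 / ((k : ℝ) + 1)
  have tendsto_c : Tendsto c atTop (𝓝 0) := tendsto_one_div_add_atTop_nhds_zero_nat
  have c_pos (k) : 0 < c k := by positivity
  have c_le_one (k) : c k ≤ 1 := div_le_one_of_le₀ (by simp) (by positivity)
  obtain ⟨C, hC⟩ := (φ.contDiff.continuous_fderiv one_ne_zero).bounded_above_of_compact_support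
    (φ.hasCompactSupport.fderiv ℝ)
  have norm_fderiv_le (k) (x) : ‖fderiv ℝ (fun x => φ (c k • x)) x‖ ≤ c k * C := by
    rw [fderiv_comp_smul, norm_smul, norm_of_nonneg (c_pos k).le]
    exact mul_le_mul_of_nonneg_left (hC _) (c_pos k).le
  refine ⟨fun k x => φ (c k • x), C, fun k => φ.contDiff.comp (contDiff_const_smul _),
    fun k => φ.hasCompactSupport.comp_smul (c_pos k).ne', fun k x => ⟨φ.nonneg, φ.le_one⟩,
    fun x => ?tendsto_one, fun k x => ?bounded_fderiv, fun x => ?tendsto_fderiv⟩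
  case tendsto_one =>
    have tendsto_smul : Tendsto (fun k => c k • x) atTop (𝓝 0) := by
      simpa only [zero_smul] using tendsto_c.smul_const x
    have φ_zero : φ 0 = 1 := φ.one_of_mem_closedBall (by simp [φ])
    simpa only [φ_zero, Function.comp_def] using (φ.continuous.tendsto 0).comp tendsto_smul
  case bounded_fderiv =>
    exact (norm_fderiv_le k x).trans
      (mul_le_of_le_one_left ((norm_nonneg _).trans (hC 0)) (c_le_one k))
  case tendsto_fderiv =>
    have tendsto_bound : Tendsto (fun k => c k * C) atTop (𝓝 0) := by
      simpa only [zero_mul] using tendsto_c.mul_const C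
    exact squeeze_zero_norm (norm_fderiv_le · x) tendsto_bound

end Approximation

section Fatou

variable {α : Type*} [MeasurableSpace α] {μ : Measure α}

lemma lintegral_le_lintegral_of_tendsto {f g B : α → ℝ≥0∞} {F G : ℕ → α → ℝ≥0∞}
    (hF : ∀ k, Measurable (F k)) (hG : ∀ k, Measurable (G k))
    (hFG : ∀ k, ∫⁻ x, F k x ∂μ ≤ ∫⁻ x, G k x ∂μ)
    (hf : ∀ x, Tendsto (F · x) atTop (𝓝 (f x))) (hg : ∀ x, Tendsto (G · x) atTop (𝓝 (g x)))
    (hGB : ∀ k x, G k x ≤ B x) (hB : ∫⁻ x, B x ∂μ ≠ ⊤) :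
    ∫⁻ x, f x ∂μ ≤ ∫⁻ x, g x ∂μ :=
  calc ∫⁻ x, f x ∂μ = ∫⁻ x, liminf (F · x) atTop ∂μ :=
        lintegral_congr fun x => (hf x).liminf_eq.symm
    _ ≤ liminf (fun k => ∫⁻ x, F k x ∂μ) atTop := lintegral_liminf_le hF
    _ ≤ liminf (fun k => ∫⁻ x, G k x ∂μ) atTop := liminf_le_liminf (.of_forall hFG)
    _ = ∫⁻ x, g x ∂μ := (tendsto_lintegral_of_dominated_convergence B hG
        (fun k => .of_forall (hGB k)) hB (.of_forall hg)).liminf_eq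

lemma integrable_and_integral_le_of_lintegral_ofReal_le {f g : α → ℝ}
    (hf : AEStronglyMeasurable f μ) (hf0 : 0 ≤ f) (hg : Integrable g μ) (hg0 : 0 ≤ g)
    (hfg : ∫⁻ x, ENNReal.ofReal (f x) ∂μ ≤ ∫⁻ x, ENNReal.ofReal (g x) ∂μ) :
    Integrable f μ ∧ ∫ x, f x ∂μ ≤ ∫ x, g x ∂μ := by
  rw [← ofReal_integral_eq_lintegral_ofReal hg (.of_forall hg0)] at hfg
  refine ⟨(lintegral_ofReal_ne_top_iff_integrable hf (.of_forall hf0)).1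
    (ne_top_of_le_ne_top ENNReal.ofReal_ne_top hfg), ?_⟩
  rw [integral_eq_lintegral_of_nonneg_ae (.of_forall hf0) hf]
  exact ENNReal.toReal_le_of_le_ofReal (integral_nonneg hg0) hfg

end Fatou

section GaussianMeasure

variable {E : Type*} [NormedAddCommGroup E] [InnerProductSpace ℝ E]

/-- The density of the standard Gaussian measure on a Euclidean space. -/
noncomputable def gaussianDensity (x : E) : ℝ :=
  (2 * π) ^ (-(finrank ℝ E : ℝ) / 2) * rexp (-‖x‖ ^ 2 / 2)

lemma gaussianDensity_nonneg (x : E) : 0 ≤ gaussianDensity x := by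
  unfold gaussianDensity
  positivity

lemma contDiff_gaussianDensity {m : ℕ∞ω} : ContDiff ℝ m (gaussianDensity (E := E)) :=
  contDiff_const.mul ((contDiff_norm_sq ℝ).neg.div_const 2).exp

lemma fderiv_gaussianDensity (x : E) :
    fderiv ℝ gaussianDensity x = -(gaussianDensity x • innerSL ℝ x) := by
  have exponent : HasFDerivAt (fun x : E => -‖x‖ ^ 2 / 2) (-innerSL ℝ x) x := by
    convert! (hasStrictFDerivAt_norm_sq x).hasFDerivAt.neg.mul_const (2⁻¹ : ℝ) using 1
    ext v
    simp
  have density := exponent.exp.const_mul ((2 * π) ^ (-(finrank ℝ E : ℝ) / 2))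
  refine (show HasFDerivAt gaussianDensity _ x from density).fderiv.trans ?_
  rw [smul_smul, smul_neg, gaussianDensity]

variable [FiniteDimensional ℝ E] [MeasurableSpace E] [BorelSpace E]

lemma integrable_gaussianDensity : Integrable (gaussianDensity (E := E)) := by
  have integrable_exp : Integrable fun x : E => rexp (-(1 / 2) * ‖x‖ ^ 2) := by
    refine .of_integral_ne_zero ?_
    rw [GaussianFourier.integral_rexp_neg_mul_sq_norm (by norm_num)]
    positivity
  refine (integrable_exp.const_mul ((2 * π) ^ (-(finrank ℝ E : ℝ) / 2))).congr
    (.of_forall fun x => ?_)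
  simp only [gaussianDensity]
  ring_nf

variable (E) in
/-- The standard Gaussian measure, given by its density with respect to Lebesgue measure. -/
noncomputable def gaussianMeasure : Measure E :=
  volume.withDensity fun x => ENNReal.ofReal (gaussianDensity x)

instance : IsFiniteMeasure (gaussianMeasure E) :=
  isFiniteMeasure_withDensity_ofReal integrable_gaussianDensity.2

lemma integral_gaussianMeasure (g : E → ℝ) :
    ∫ x, g x ∂gaussianMeasure E = ∫ x, gaussianDensity x * g x := by
  rw [gaussianMeasure, integral_withDensity_eq_integral_toReal_smul
    (contDiff_gaussianDensity (m := 0)).continuous.measurable.ennreal_ofReal (by simp)]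
  simp [ENNReal.toReal_ofReal (gaussianDensity_nonneg _)]

end GaussianMeasure

section GaussianDivergence

variable {E : Type*} [NormedAddCommGroup E] [InnerProductSpace ℝ E] [FiniteDimensional ℝ E]
  {f : E → E}

/-- The Gaussian divergence `δf(x) = f(x)·x − Tr Df(x)`, the formal adjoint of the gradient in
`L²` of the standard Gaussian measure. -/
noncomputable def gaussianDivergence (f : E → E) (x : E) : ℝ :=
  ⟪f x, x⟫ - traceCLM E (fderiv ℝ f x)

lemma continuous_gaussianDivergence (hf : ContDiff ℝ 1 f) : Continuous (gaussianDivergence f) :=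
  (hf.continuous.inner continuous_id).sub
    ((traceCLM E).continuous.comp (hf.continuous_fderiv one_ne_zero))

lemma hasCompactSupport_gaussianDivergence (hc : HasCompactSupport f) :
    HasCompactSupport (gaussianDivergence f) := by
  have inner_part : HasCompactSupport fun x => ⟪f x, x⟫ :=
    hc.mono fun x hx hfx => hx (by simp [hfx])
  exact inner_part.sub ((hc.fderiv ℝ).comp_left (map_zero _))

lemma gaussianDivergence_smul {w : E → ℝ} {x : E} (hw : DifferentiableAt ℝ w x)
    (hf : DifferentiableAt ℝ f x) :
    gaussianDivergence (fun y => w y • f y) x =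
      w x * gaussianDivergence f x - fderiv ℝ w x (f x) := by
  simp only [gaussianDivergence, fderiv_fun_smul hw hf, map_add, map_smul, traceCLM_smulRight,
    real_inner_smul_left, smul_eq_mul]
  ring

lemma traceCLM_fderiv_gaussianDensity_smul {x : E} (hf : DifferentiableAt ℝ f x) :
    traceCLM E (fderiv ℝ (fun y => gaussianDensity y • f y) x) =
      -(gaussianDensity x * gaussianDivergence f x) := by
  have hρ : DifferentiableAt ℝ (gaussianDensity (E := E)) x :=
    contDiff_gaussianDensity.differentiable one_ne_zero x
  simp only [fderiv_fun_smul hρ hf, map_add, map_smul, traceCLM_smulRight, fderiv_gaussianDensity,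
    gaussianDivergence, neg_apply, smul_apply, innerSL_apply_apply, real_inner_comm x, smul_eq_mul]
  ring

lemma contDiff_gaussianDivergence (hf : ContDiff ℝ 2 f) : ContDiff ℝ 1 (gaussianDivergence f) :=
  ((hf.of_le one_le_two).inner ℝ contDiff_id).sub
    ((traceCLM E).contDiff.comp (hf.fderiv_right (by norm_num)))

lemma fderiv_gaussianDivergence_apply (hf : ContDiff ℝ 2 f) (x h : E) :
    fderiv ℝ (gaussianDivergence f) x h =
      ⟪f x, h⟫ + ⟪fderiv ℝ f x h, x⟫ - traceCLM E (fderiv ℝ (fderiv ℝ f) x h) := by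
  have hf' : HasFDerivAt f (fderiv ℝ f x) x := (hf.differentiable two_ne_zero x).hasFDerivAt
  have hf'' : HasFDerivAt (fderiv ℝ f) (fderiv ℝ (fderiv ℝ f) x) x :=
    ((hf.fderiv_right (m := 1) (by norm_num)).differentiable one_ne_zero x).hasFDerivAt
  have hasFDerivAt_div : HasFDerivAt (gaussianDivergence f) _ x :=
    (hf'.inner ℝ (hasFDerivAt_id x)).sub ((traceCLM E).hasFDerivAt.comp x hf'')
  rw [hasFDerivAt_div.fderiv]
  simp

lemma fderiv_gaussianDivergence_apply_self (hf : ContDiff ℝ 2 f) (x : E) :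
    fderiv ℝ (gaussianDivergence f) x (f x) =
      ‖f x‖ ^ 2 + traceCLM E (fderiv ℝ f x ∘L fderiv ℝ f x) +
        gaussianDivergence (fun y => fderiv ℝ f y (f y)) x := by
  have hf' : DifferentiableAt ℝ f x := hf.differentiable two_ne_zero x
  have hf'' : DifferentiableAt ℝ (fderiv ℝ f) x :=
    (hf.fderiv_right (m := 1) (by norm_num)).differentiable one_ne_zero x
  have flip_snd_fderiv :
      (fderiv ℝ (fderiv ℝ f) x).flip (f x) = fderiv ℝ (fderiv ℝ f) x (f x) :=
    ContinuousLinearMap.ext fun h => (hf.contDiffAt.isSymmSndFDerivAt (by simp)).eq h (f x)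
  rw [fderiv_gaussianDivergence_apply hf, gaussianDivergence, fderiv_clm_apply hf'' hf', map_add,
    flip_snd_fderiv, real_inner_self_eq_norm_sq]
  ring

variable [MeasurableSpace E] [BorelSpace E]

lemma integral_gaussianDivergence_eq_zero (hf : ContDiff ℝ 1 f) (hc : HasCompactSupport f) :
    ∫ x, gaussianDivergence f x ∂gaussianMeasure E = 0 := by
  rw [integral_gaussianMeasure, ← neg_eq_zero, ← integral_neg]
  simp only [← traceCLM_fderiv_gaussianDensity_smul (hf.differentiable one_ne_zero _)]
  exact integral_traceCLM_fderiv_eq_zero (contDiff_gaussianDensity.smul hf) hc.smul_left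

lemma integral_mul_gaussianDivergence {w : E → ℝ} (hw : ContDiff ℝ 1 w) (hf : ContDiff ℝ 1 f)
    (hc : HasCompactSupport f) :
    ∫ x, w x * gaussianDivergence f x ∂gaussianMeasure E =
      ∫ x, fderiv ℝ w x (f x) ∂gaussianMeasure E := by
  have continuous_fderiv := hw.continuous_fderiv one_ne_zero
  have integrable_mul : Integrable (fun x => w x * gaussianDivergence f x) (gaussianMeasure E) :=
    (hw.continuous.mul (continuous_gaussianDivergence hf)).integrable_of_hasCompactSupport
      (hasCompactSupport_gaussianDivergence hc).mul_left
  have integrable_apply : Integrable (fun x => fderiv ℝ w x (f x)) (gaussianMeasure E) :=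
    (continuous_fderiv.clm_apply hf.continuous).integrable_of_hasCompactSupport
      (hc.mono fun x hx hfx => hx (by simp [hfx]))
  rw [← sub_eq_zero, ← integral_sub integrable_mul integrable_apply]
  simp only [← gaussianDivergence_smul (hw.differentiable one_ne_zero _)
    (hf.differentiable one_ne_zero _)]
  exact integral_gaussianDivergence_eq_zero (hw.smul hf) hc.smul_left

lemma integrable_norm_sq_add_traceCLM_comp_self (hf : ContDiff ℝ 1 f) (hc : HasCompactSupport f) :
    Integrable (fun x => ‖f x‖ ^ 2 + traceCLM E (fderiv ℝ f x ∘L fderiv ℝ f x))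
      (gaussianMeasure E) := by
  have continuous_fderiv := hf.continuous_fderiv one_ne_zero
  refine Continuous.integrable_of_hasCompactSupport ((hf.continuous.norm.pow 2).add
    ((traceCLM E).continuous.comp (continuous_fderiv.clm_comp continuous_fderiv))) (.add ?_ ?_)
  · exact hc.comp_left (g := fun y => ‖y‖ ^ 2) (by simp)
  · exact (hc.fderiv ℝ).comp_left (g := fun L => traceCLM E (L ∘L L)) (by simp)

lemma integral_gaussianDivergence_sq (hf : ContDiff ℝ 2 f) (hc : HasCompactSupport f) :
    ∫ x, gaussianDivergence f x ^ 2 ∂gaussianMeasure E =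
      ∫ x, (‖f x‖ ^ 2 + traceCLM E (fderiv ℝ f x ∘L fderiv ℝ f x)) ∂gaussianMeasure E := by
  have hf1 : ContDiff ℝ 1 f := hf.of_le one_le_two
  have hg : ContDiff ℝ 1 fun x => fderiv ℝ f x (f x) :=
    (hf.fderiv_right (by norm_num)).clm_apply hf1
  have hcg : HasCompactSupport fun x => fderiv ℝ f x (f x) :=
    hc.mono fun x hx hfx => hx (by simp [hfx])
  have integrable_div : Integrable (gaussianDivergence fun x => fderiv ℝ f x (f x))
      (gaussianMeasure E) :=
    (continuous_gaussianDivergence hg).integrable_of_hasCompactSupport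
      (hasCompactSupport_gaussianDivergence hcg)
  simp only [sq (gaussianDivergence f _)]
  rw [integral_mul_gaussianDivergence (contDiff_gaussianDivergence hf) hf1 hc]
  simp only [fderiv_gaussianDivergence_apply_self hf]
  rw [integral_add (integrable_norm_sq_add_traceCLM_comp_self hf1 hc) integrable_div,
    integral_gaussianDivergence_eq_zero hg hcg, add_zero]

end GaussianDivergence

section Energy

variable {E : Type*} [NormedAddCommGroup E] [InnerProductSpace ℝ E] [FiniteDimensional ℝ E]
  {f : E → E}

/-- The energy density `|f|² + ‖Df‖₂²`, whose Gaussian integral is the squared Sobolev norm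
of `f`. -/
noncomputable def energyDensity (f : E → E) (x : E) : ℝ :=
  ‖f x‖ ^ 2 + hilbertSchmidtSq (fderiv ℝ f x : E →ₗ[ℝ] E)

lemma energyDensity_nonneg (f : E → E) (x : E) : 0 ≤ energyDensity f x :=
  add_nonneg (sq_nonneg _) (hilbertSchmidtSq_nonneg _)

lemma continuous_energyDensity (hf : ContDiff ℝ 1 f) : Continuous (energyDensity f) :=
  (hf.continuous.norm.pow 2).add
    (continuous_hilbertSchmidtSq.comp (hf.continuous_fderiv one_ne_zero))

lemma hasCompactSupport_energyDensity (hc : HasCompactSupport f) :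
    HasCompactSupport (energyDensity f) :=
  (hc.comp_left (g := fun y => ‖y‖ ^ 2) (by simp)).add
    ((hc.fderiv ℝ).comp_left (g := fun L : E →L[ℝ] E => hilbertSchmidtSq (L : E →ₗ[ℝ] E))
      (by simp [hilbertSchmidtSq]))

lemma energyDensity_smul_le {χ : E → ℝ} {x : E} {C : ℝ} (hχ : DifferentiableAt ℝ χ x)
    (hf : DifferentiableAt ℝ f x) (hχx : χ x ∈ Set.Icc 0 1) (hC : ‖fderiv ℝ χ x‖ ≤ C) :
    energyDensity (fun y => χ y • f y) x ≤ (2 + 2 * finrank ℝ E * C ^ 2) * energyDensity f x := by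
  have hχx_sq : χ x ^ 2 ≤ 1 := pow_le_one₀ hχx.1 hχx.2
  have value_le : ‖χ x • f x‖ ^ 2 ≤ ‖f x‖ ^ 2 := by
    rw [norm_smul, mul_pow, norm_eq_abs, sq_abs]
    exact mul_le_of_le_one_left (sq_nonneg _) hχx_sq
  have smul_fderiv_le : hilbertSchmidtSq (χ x • (fderiv ℝ f x : E →ₗ[ℝ] E)) ≤
      hilbertSchmidtSq (fderiv ℝ f x : E →ₗ[ℝ] E) := by
    rw [hilbertSchmidtSq_smul]
    exact mul_le_of_le_one_left (hilbertSchmidtSq_nonneg _) hχx_sq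
  have smulRight_le : hilbertSchmidtSq ((fderiv ℝ χ x).smulRight (f x) : E →ₗ[ℝ] E) ≤
      finrank ℝ E * C ^ 2 * ‖f x‖ ^ 2 := by
    refine (hilbertSchmidtSq_le_finrank_mul _).trans ?_
    rw [ContinuousLinearMap.norm_smulRight_apply, mul_pow, ← mul_assoc]
    gcongr
  have fderiv_le := hilbertSchmidtSq_add_le (χ x • (fderiv ℝ f x : E →ₗ[ℝ] E))
    ((fderiv ℝ χ x).smulRight (f x) : E →ₗ[ℝ] E)
  have cross_nonneg : 0 ≤ finrank ℝ E * C ^ 2 * hilbertSchmidtSq (fderiv ℝ f x : E →ₗ[ℝ] E) :=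
    mul_nonneg (by positivity) (hilbertSchmidtSq_nonneg _)
  simp only [energyDensity, fderiv_fun_smul hχ hf, ContinuousLinearMap.toLinearMap_add,
    ContinuousLinearMap.toLinearMap_smul]
  linarith [sq_nonneg ‖f x‖]

variable [MeasurableSpace E] [BorelSpace E]

lemma lintegral_gaussianDivergence_sq_le_of_tendsto {F : ℕ → E → E} {B : E → ℝ}
    (hF : ∀ k, ContDiff ℝ 1 (F k))
    (hle : ∀ k, ∫⁻ x, ENNReal.ofReal (gaussianDivergence (F k) x ^ 2) ∂gaussianMeasure E ≤
      ∫⁻ x, ENNReal.ofReal (energyDensity (F k) x) ∂gaussianMeasure E)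
    (hFf : ∀ x, Tendsto (F · x) atTop (𝓝 (f x)))
    (hDFf : ∀ x, Tendsto (fun k => fderiv ℝ (F k) x) atTop (𝓝 (fderiv ℝ f x)))
    (hFB : ∀ k x, energyDensity (F k) x ≤ B x) (hB : Integrable B (gaussianMeasure E)) :
    ∫⁻ x, ENNReal.ofReal (gaussianDivergence f x ^ 2) ∂gaussianMeasure E ≤
      ∫⁻ x, ENNReal.ofReal (energyDensity f x) ∂gaussianMeasure E := by
  refine lintegral_le_lintegral_of_tendsto
    (fun k => ((continuous_gaussianDivergence (hF k)).pow 2).measurable.ennreal_ofReal)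
    (fun k => (continuous_energyDensity (hF k)).measurable.ennreal_ofReal) hle
    (fun x => ENNReal.tendsto_ofReal (.pow ?_ 2)) (fun x => ENNReal.tendsto_ofReal ?_)
    (fun k x => ENNReal.ofReal_le_ofReal (hFB k x)) hB.lintegral_lt_top.ne
  · exact ((hFf x).inner tendsto_const_nhds).sub (((traceCLM E).continuous.tendsto _).comp (hDFf x))
  · exact ((hFf x).norm.pow 2).add ((continuous_hilbertSchmidtSq.tendsto _).comp (hDFf x))

lemma lintegral_gaussianDivergence_sq_le_of_contDiff_two (hf : ContDiff ℝ 2 f)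
    (hc : HasCompactSupport f) :
    ∫⁻ x, ENNReal.ofReal (gaussianDivergence f x ^ 2) ∂gaussianMeasure E ≤
      ∫⁻ x, ENNReal.ofReal (energyDensity f x) ∂gaussianMeasure E := by
  have hf1 : ContDiff ℝ 1 f := hf.of_le one_le_two
  have hasCompactSupport_sq : HasCompactSupport fun x => gaussianDivergence f x ^ 2 :=
    (hasCompactSupport_gaussianDivergence hc).comp_left (g := fun t : ℝ => t ^ 2) (by simp)
  have integrable_sq : Integrable (fun x => gaussianDivergence f x ^ 2) (gaussianMeasure E) :=
    ((continuous_gaussianDivergence hf1).pow 2).integrable_of_hasCompactSupport hasCompactSupport_sq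
  have integrable_energy : Integrable (energyDensity f) (gaussianMeasure E) :=
    (continuous_energyDensity hf1).integrable_of_hasCompactSupport
      (hasCompactSupport_energyDensity hc)
  rw [← ofReal_integral_eq_lintegral_ofReal integrable_sq (.of_forall fun x => sq_nonneg _),
    ← ofReal_integral_eq_lintegral_ofReal integrable_energy (.of_forall (energyDensity_nonneg f)),
    integral_gaussianDivergence_sq hf hc]
  refine ENNReal.ofReal_le_ofReal (integral_mono
    (integrable_norm_sq_add_traceCLM_comp_self hf1 hc) integrable_energy fun x => ?_)
  exact add_le_add_right (trace_comp_self_le_hilbertSchmidtSq (fderiv ℝ f x : E →ₗ[ℝ] E)) _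

lemma lintegral_gaussianDivergence_sq_le_of_hasCompactSupport (hf : ContDiff ℝ 1 f)
    (hc : HasCompactSupport f) :
    ∫⁻ x, ENNReal.ofReal (gaussianDivergence f x ^ 2) ∂gaussianMeasure E ≤
      ∫⁻ x, ENNReal.ofReal (energyDensity f x) ∂gaussianMeasure E := by
  obtain ⟨F, C, C', smooth, compact, tendsto, tendsto_fderiv, norm_le, norm_fderiv_le⟩ :=
    exists_smooth_approx hf hc
  refine lintegral_gaussianDivergence_sq_le_of_tendsto (fun k => (smooth k).of_le (by simp))
    (fun k => lintegral_gaussianDivergence_sq_le_of_contDiff_two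
      (contDiff_infty.1 (smooth k) 2) (compact k)) tendsto tendsto_fderiv
    (B := fun _ => C ^ 2 + finrank ℝ E * C' ^ 2) (fun k x => ?_) (integrable_const _)
  refine add_le_add (by gcongr; exact norm_le k x) ((hilbertSchmidtSq_le_finrank_mul _).trans ?_)
  gcongr
  exact norm_fderiv_le k x

lemma lintegral_gaussianDivergence_sq_le (hf : ContDiff ℝ 1 f)
    (hE : Integrable (energyDensity f) (gaussianMeasure E)) :
    ∫⁻ x, ENNReal.ofReal (gaussianDivergence f x ^ 2) ∂gaussianMeasure E ≤
      ∫⁻ x, ENNReal.ofReal (energyDensity f x) ∂gaussianMeasure E := by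
  obtain ⟨χ, C, smooth, compact, mem_Icc, tendsto_one, norm_fderiv_le, tendsto_fderiv⟩ :=
    exists_seq_smooth_cutoff E
  have hχ (k) : ContDiff ℝ 1 (χ k) := (smooth k).of_le (by simp)
  have hχ' (k) (x) : DifferentiableAt ℝ (χ k) x := (hχ k).differentiable one_ne_zero x
  have hf' (x) : DifferentiableAt ℝ f x := hf.differentiable one_ne_zero x
  refine lintegral_gaussianDivergence_sq_le_of_tendsto (F := fun k x => χ k x • f x)
    (fun k => (hχ k).smul hf)
    (fun k => lintegral_gaussianDivergence_sq_le_of_hasCompactSupport ((hχ k).smul hf)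
      (compact k).smul_right)
    (fun x => ?tendsto) (fun x => ?tendsto_fderiv)
    (fun k x => energyDensity_smul_le (hχ' k x) (hf' x) (mem_Icc k x) (norm_fderiv_le k x))
    (hE.const_mul _)
  case tendsto => simpa only [one_smul] using (tendsto_one x).smul_const (f x)
  case tendsto_fderiv =>
    have smulRight_tendsto :
        Tendsto (fun k => (fderiv ℝ (χ k) x).smulRight (f x)) atTop (𝓝 0) := by
      refine squeeze_zero_norm (fun k => (ContinuousLinearMap.norm_smulRight_apply _ _).le) ?_
      simpa only [norm_zero, zero_mul] using (tendsto_fderiv x).norm.mul_const ‖f x‖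
    simpa only [fderiv_fun_smul (hχ' _ x) (hf' x), one_smul, add_zero] using
      ((tendsto_one x).smul_const (fderiv ℝ f x)).add smulRight_tendsto

end Energy

section EuclideanCoordinates

variable {ι : Type*} [Fintype ι]

lemma gaussianMeasure_euclideanSpace : gaussianMeasure (EuclideanSpace ℝ ι) =
    volume.withDensity fun x => ENNReal.ofReal
      ((2 * π) ^ (-(Fintype.card ι : ℝ) / 2) * rexp (-‖x‖ ^ 2 / 2)) := by
  simp only [gaussianMeasure, gaussianDensity, finrank_euclideanSpace]

variable [DecidableEq ι] (f : EuclideanSpace ℝ ι → EuclideanSpace ℝ ι) (x : EuclideanSpace ℝ ι)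

lemma gaussianDivergence_euclideanSpace : gaussianDivergence f x =
    ⟪f x, x⟫ - ∑ i, fderiv ℝ f x (EuclideanSpace.single i 1) i := by
  rw [gaussianDivergence, traceCLM_apply, trace_eq_sum_apply_single]
  rfl

lemma energyDensity_euclideanSpace : energyDensity f x =
    ‖f x‖ ^ 2 + ∑ i, ∑ j, fderiv ℝ f x (EuclideanSpace.single j 1) i ^ 2 := by
  rw [energyDensity, hilbertSchmidtSq_eq_sum_apply_single_sq]
  rfl

end EuclideanCoordinates

end Ramer

open Ramer in
theorem statement0_general {E : Type*} [NormedAddCommGroup E] [InnerProductSpace ℝ E]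
    [FiniteDimensional ℝ E] [MeasurableSpace E] [BorelSpace E] {f : E → E} (hf : ContDiff ℝ 1 f)
    (hE : Integrable (energyDensity f) (gaussianMeasure E)) :
    Integrable (fun x => gaussianDivergence f x ^ 2) (gaussianMeasure E) ∧
      ∫ x, gaussianDivergence f x ^ 2 ∂gaussianMeasure E ≤
        ∫ x, energyDensity f x ∂gaussianMeasure E :=
  integrable_and_integral_le_of_lintegral_ofReal_le
    ((continuous_gaussianDivergence hf).pow 2).aestronglyMeasurable (fun _ => sq_nonneg _) hE
    (energyDensity_nonneg f) (lintegral_gaussianDivergence_sq_le hf hE)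

/-- Ramer's lemma. Let `μ` be the standard Gaussian measure on `ℝⁿ` and
`f : ℝⁿ → ℝⁿ` a `C¹` map such that `x ↦ |f x|²` and `x ↦ ‖Jf(x)‖₂²` (squared Hilbert–Schmidt
norm of the Jacobian) are `μ`-integrable. Then
`∫ (f(x)·x − Tr Jf(x))² dμ ≤ ∫ (|f(x)|² + ‖Jf(x)‖₂²) dμ`. -/
theorem statement0 (n : ℕ)
    (μ : Measure (EuclideanSpace ℝ (Fin n)))
    (hμ : μ = volume.withDensity
      (fun x => ENNReal.ofReal ((2 * π) ^ (-(n : ℝ) / 2) * Real.exp (-‖x‖ ^ 2 / 2))))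
    (f : EuclideanSpace ℝ (Fin n) → EuclideanSpace ℝ (Fin n))
    (hf : ContDiff ℝ 1 f)
    (hf2 : Integrable (fun x => ‖f x‖ ^ 2) μ)
    (hJf2 : Integrable
      (fun x => ∑ i : Fin n, ∑ j : Fin n,
        (fderiv ℝ f x (EuclideanSpace.single j (1 : ℝ)) i) ^ 2) μ) :
    ∫ x, (⟪f x, x⟫ - ∑ i : Fin n, fderiv ℝ f x (EuclideanSpace.single i (1 : ℝ)) i) ^ 2 ∂μ
      ≤ ∫ x, (‖f x‖ ^ 2 + ∑ i : Fin n, ∑ j : Fin n,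
          (fderiv ℝ f x (EuclideanSpace.single j (1 : ℝ)) i) ^ 2) ∂μ := by
  have hμ_gaussian : μ = Ramer.gaussianMeasure (EuclideanSpace ℝ (Fin n)) := by
    rw [hμ, Ramer.gaussianMeasure_euclideanSpace, Fintype.card_fin]
  subst hμ_gaussian
  have integrable_energy : Integrable (Ramer.energyDensity f) (Ramer.gaussianMeasure _) :=
    (hf2.add hJf2).congr (.of_forall fun x => (Ramer.energyDensity_euclideanSpace f x).symm)
  simpa only [Ramer.gaussianDivergence_euclideanSpace, Ramer.energyDensity_euclideanSpace] using
    (statement0_general hf integrable_energy).2
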